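/- arXiv:cs/0303022 — 2 statements merged into one kernel-verified Lean document; each statement's English description precedes it below -/
import Mathlib

section
/- For all n > 24, 0 < ε < 1/3, and δ > 0, if m = ε^{-2} n^{1+δ}, then P{ |∑_{i=1}^n k_i(x)(k_i(x)−1)/(m(m−1)) · 1/‖p‖² − 1| ≤ 22 ε } ≥ 1 − (10/9) e^{−n^{δ}}, where x ∈ U^m is drawn from the product measure. -/
/-- Number of keys of the sequence `x` (counted with multiplicity) hashed into slot `i`. -/
def kcount {U : Type*} [Fintype U] {n m : ℕ} (h : U → Fin n) (x : Fin m → U) (i : Fin n) : ℕ :=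
  (Finset.univ.filter (fun j => h (x j) = i)).card

/-- Probability of a set `S` of key sequences, under the product measure induced by
the probability mass function `q` on the key space `U`. -/
noncomputable def Pr {U : Type*} [Fintype U] {m : ℕ} (q : U → ℝ) (S : Set (Fin m → U)) : ℝ :=
  ∑ x : Fin m → U, S.indicator (fun y => ∏ j, q (y j)) x

/-- The empirical collision probability `∑ i, k_i(x)(k_i(x) − 1) / (m(m−1))`
of a sequence `x` of `m` keys. -/
noncomputable def collEst {U : Type*} [Fintype U] {n m : ℕ} (h : U → Fin n)
    (x : Fin m → U) : ℝ :=
  ∑ i : Fin n, (kcount h x i : ℝ) * ((kcount h x i : ℝ) - 1) / ((m : ℝ) * ((m : ℝ) - 1))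


/-- Expectation of `f` over `m` independent keys distributed according to `q`. -/
noncomputable def seqMean {U : Type*} [Fintype U] (q : U → ℝ) (m : ℕ)
    (f : (Fin m → U) → ℝ) : ℝ :=
  ∑ x : Fin m → U, (∏ j, q (x j)) * f x

section SeqMean

variable {U : Type*} [Fintype U] {q : U → ℝ}

theorem seqMean_zero (f : (Fin 0 → U) → ℝ) : seqMean q 0 f = f Fin.elim0 := by
  simp only [seqMean, Finset.univ_unique, Finset.sum_singleton, Finset.univ_eq_empty,
    Finset.prod_empty, one_mul]
  exact congrArg f (Subsingleton.elim _ _)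

theorem seqMean_succ (m : ℕ) (f : (Fin (m + 1) → U) → ℝ) :
    seqMean q (m + 1) f = ∑ u, q u * seqMean q m (fun x => f (Fin.cons u x)) := by
  unfold seqMean
  rw [← (Fin.consEquiv (fun _ => U)).sum_comp, Fintype.sum_prod_type]
  refine Finset.sum_congr rfl fun u _ => ?_
  rw [Finset.mul_sum]
  refine Finset.sum_congr rfl fun x _ => ?_
  simp [Fin.consEquiv, Fin.prod_univ_succ, mul_assoc]

theorem seqMean_mono (hq0 : ∀ u, 0 ≤ q u) {m : ℕ} {f g : (Fin m → U) → ℝ}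
    (hfg : ∀ x, f x ≤ g x) : seqMean q m f ≤ seqMean q m g :=
  Finset.sum_le_sum fun x _ =>
    mul_le_mul_of_nonneg_left (hfg x) (Finset.prod_nonneg fun _ _ => hq0 _)

theorem seqMean_add (m : ℕ) (f g : (Fin m → U) → ℝ) :
    seqMean q m (fun x => f x + g x) = seqMean q m f + seqMean q m g := by
  simp [seqMean, mul_add, Finset.sum_add_distrib]

theorem seqMean_const_mul (m : ℕ) (c : ℝ) (f : (Fin m → U) → ℝ) :
    seqMean q m (fun x => c * f x) = c * seqMean q m f := by
  simp [seqMean, Finset.mul_sum, mul_left_comm]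

theorem seqMean_const (hq1 : ∑ u, q u = 1) (m : ℕ) (c : ℝ) :
    seqMean q m (fun _ => c) = c := by
  induction m with
  | zero => rw [seqMean_zero]
  | succ m ih => rw [seqMean_succ, ih, ← Finset.sum_mul, hq1, one_mul]

theorem sq_seqMean_le (hq0 : ∀ u, 0 ≤ q u) (hq1 : ∑ u, q u = 1) (m : ℕ)
    (f : (Fin m → U) → ℝ) : seqMean q m f ^ 2 ≤ seqMean q m (fun x => f x ^ 2) := by
  have key := seqMean_mono hq0 (f := fun x => (2 * seqMean q m f) * f x)
    (g := fun x => f x ^ 2 + seqMean q m f ^ 2)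
    (fun x => by nlinarith [sq_nonneg (f x - seqMean q m f)])
  rw [seqMean_const_mul, seqMean_add, seqMean_const hq1] at key
  linarith

/-- The Hoeffding lemma for a centred variable bounded by `c` on a finite probability space. -/
theorem sum_mul_exp_le (hq0 : ∀ u, 0 ≤ q u) (hq1 : ∑ u, q u = 1) {X : U → ℝ}
    (hX : ∑ u, q u * X u = 0) {c : ℝ} (hc : 0 < c) (hXc : ∀ u, |X u| ≤ c) (l : ℝ) :
    ∑ u, q u * Real.exp (l * X u) ≤ Real.exp ((l * c) ^ 2 / 2) := by
  have hchord : ∀ u, Real.exp (l * X u) ≤ Real.cosh (l * c) + X u * (Real.sinh (l * c) / c) := by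
    intro u
    obtain ⟨h1, h2⟩ := abs_le.1 (hXc u)
    have ha : 0 ≤ (c + X u) / (2 * c) := div_nonneg (by linarith) (by positivity)
    have hb : 0 ≤ (c - X u) / (2 * c) := div_nonneg (by linarith) (by positivity)
    have hconv := convexOn_exp.2 (Set.mem_univ (l * c)) (Set.mem_univ (-(l * c))) ha hb
      (by field_simp; ring)
    simp only [smul_eq_mul] at hconv
    have e1 : (c + X u) / (2 * c) * (l * c) + (c - X u) / (2 * c) * -(l * c) = l * X u := by
      field_simp; ring
    rw [e1] at hconv
    refine hconv.trans (le_of_eq ?_)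
    rw [Real.cosh_eq, Real.sinh_eq]
    field_simp; ring
  calc ∑ u, q u * Real.exp (l * X u)
      ≤ ∑ u, q u * (Real.cosh (l * c) + X u * (Real.sinh (l * c) / c)) :=
        Finset.sum_le_sum fun u _ => mul_le_mul_of_nonneg_left (hchord u) (hq0 u)
    _ = Real.cosh (l * c) := by
        simp only [mul_add, ← mul_assoc, Finset.sum_add_distrib, ← Finset.sum_mul, hq1, hX]
        ring
    _ ≤ _ := Real.cosh_le_exp_half_sq _

theorem one_sub_seqMean_le_Pr (hq0 : ∀ u, 0 ≤ q u) (hq1 : ∑ u, q u = 1) {m : ℕ}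
    (S : Set (Fin m → U)) (f : (Fin m → U) → ℝ) (hf0 : ∀ x, 0 ≤ f x)
    (hf1 : ∀ x, x ∉ S → 1 ≤ f x) : 1 - seqMean q m f ≤ Pr q S := by
  have hPr : Pr q S = seqMean q m (S.indicator 1) := by
    classical
    unfold Pr seqMean
    refine Finset.sum_congr rfl fun x _ => ?_
    by_cases hx : x ∈ S <;> simp [hx]
  have key := seqMean_mono hq0 (f := fun _ => (1 : ℝ))
    (g := fun x => f x + S.indicator 1 x) (fun x => by
      by_cases hx : x ∈ S
      · simpa [hx] using hf0 x
      · simpa [hx] using hf1 x hx)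
  rw [seqMean_const hq1, seqMean_add] at key
  rw [hPr]
  linarith

variable {E : Type*} [NormedAddCommGroup E] {V : U → E}

theorem abs_seqMean_norm_sub_le (hq0 : ∀ u, 0 ≤ q u) (hq1 : ∑ u, q u = 1) (V : U → E)
    (m : ℕ) (a b : E) :
    |seqMean q m (fun x => ‖a + ∑ j, V (x j)‖) - seqMean q m (fun x => ‖b + ∑ j, V (x j)‖)|
      ≤ ‖a - b‖ := by
  have one_side : ∀ a b : E, seqMean q m (fun x => ‖a + ∑ j, V (x j)‖)
      ≤ seqMean q m (fun x => ‖b + ∑ j, V (x j)‖) + ‖a - b‖ := by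
    intro a b
    have key := seqMean_mono hq0 (m := m) (f := fun x => ‖a + ∑ j, V (x j)‖)
      (g := fun x => ‖b + ∑ j, V (x j)‖ + ‖a - b‖) (fun x => by
        have := norm_add_le (b + ∑ j, V (x j)) (a - b)
        rwa [show b + ∑ j, V (x j) + (a - b) = a + ∑ j, V (x j) by abel] at this)
    rwa [seqMean_add, seqMean_const hq1] at key
  have h1 := one_side a b
  have h2 := one_side b a
  rw [norm_sub_rev] at h2
  rw [abs_le]
  constructor <;> linarith

theorem seqMean_exp_norm_le (hq0 : ∀ u, 0 ≤ q u) (hq1 : ∑ u, q u = 1) {c : ℝ} (hc : 0 < c)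
    (hV : ∀ u v, ‖V u - V v‖ ≤ c) (l : ℝ) (m : ℕ) (a : E) :
    seqMean q m (fun x => Real.exp (l * ‖a + ∑ j, V (x j)‖)) ≤
      Real.exp (l * seqMean q m (fun x => ‖a + ∑ j, V (x j)‖) + m * ((l * c) ^ 2 / 2)) := by
  induction m generalizing a with
  | zero => simp [seqMean_zero]
  | succ m ih =>
    set g : E → ℝ := fun b => seqMean q m (fun x => ‖b + ∑ j, V (x j)‖) with hg
    set G : ℝ := ∑ u, q u * g (a + V u) with hG
    have hstep : ∀ (u : U) (x : Fin m → U),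
        a + ∑ j, V ((Fin.cons u x : Fin (m + 1) → U) j) = a + V u + ∑ j, V (x j) := by
      intro u x
      simp [Fin.sum_univ_succ, add_assoc]
    have hmean : seqMean q (m + 1) (fun x => ‖a + ∑ j, V (x j)‖) = G := by
      simp only [seqMean_succ, hstep, hG, hg]
    rw [hmean, seqMean_succ]
    simp only [hstep]
    have hcentred : ∑ u, q u * (g (a + V u) - G) = 0 := by
      simp only [mul_sub, Finset.sum_sub_distrib, ← Finset.sum_mul, hq1]
      rw [← hG]; ring
    have hbdd : ∀ u, |g (a + V u) - G| ≤ c := by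
      intro u
      have hdiff : g (a + V u) - G = ∑ v, q v * (g (a + V u) - g (a + V v)) := by
        simp only [mul_sub, Finset.sum_sub_distrib, ← Finset.sum_mul, hq1]
        rw [← hG]; ring
      rw [hdiff]
      calc |∑ v, q v * (g (a + V u) - g (a + V v))|
          ≤ ∑ v, |q v * (g (a + V u) - g (a + V v))| := Finset.abs_sum_le_sum_abs _ _
        _ ≤ ∑ v, q v * c := Finset.sum_le_sum fun v _ => by
            rw [abs_mul, abs_of_nonneg (hq0 v)]
            refine mul_le_mul_of_nonneg_left ?_ (hq0 v)
            refine (abs_seqMean_norm_sub_le hq0 hq1 V m _ _).trans ?_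
            rw [add_sub_add_left_eq_sub]
            exact hV u v
        _ = c := by rw [← Finset.sum_mul, hq1, one_mul]
    calc ∑ u, q u * seqMean q m (fun x => Real.exp (l * ‖a + V u + ∑ j, V (x j)‖))
        ≤ ∑ u, q u * Real.exp (l * g (a + V u) + m * ((l * c) ^ 2 / 2)) :=
          Finset.sum_le_sum fun u _ => mul_le_mul_of_nonneg_left (ih _) (hq0 u)
      _ = Real.exp (l * G + m * ((l * c) ^ 2 / 2)) *
            ∑ u, q u * Real.exp (l * (g (a + V u) - G)) := by
          rw [Finset.mul_sum]
          refine Finset.sum_congr rfl fun u _ => ?_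
          rw [mul_left_comm, ← Real.exp_add]
          ring_nf
      _ ≤ Real.exp (l * G + m * ((l * c) ^ 2 / 2)) * Real.exp ((l * c) ^ 2 / 2) :=
          mul_le_mul_of_nonneg_left (sum_mul_exp_le hq0 hq1 hcentred hc hbdd l)
            (Real.exp_pos _).le
      _ = _ := by
          rw [← Real.exp_add]
          push_cast
          ring_nf

variable [InnerProductSpace ℝ E]

theorem seqMean_norm_sq_le (hq0 : ∀ u, 0 ≤ q u) (hq1 : ∑ u, q u = 1)
    (hmean : ∑ u, q u • V u = 0) {c : ℝ} (hV : ∀ u, ‖V u‖ ≤ c) (m : ℕ) (a : E) :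
    seqMean q m (fun x => ‖a + ∑ j, V (x j)‖ ^ 2) ≤ ‖a‖ ^ 2 + m * c ^ 2 := by
  induction m generalizing a with
  | zero => simp [seqMean_zero]
  | succ m ih =>
    rw [seqMean_succ]
    simp only [Fin.sum_univ_succ, Fin.cons_zero, Fin.cons_succ, ← add_assoc]
    calc ∑ u, q u * seqMean q m (fun x => ‖a + V u + ∑ j, V (x j)‖ ^ 2)
        ≤ ∑ u, q u * (‖a‖ ^ 2 + (m + 1) * c ^ 2 + 2 * inner ℝ a (V u)) :=
          Finset.sum_le_sum fun u _ => by
            refine mul_le_mul_of_nonneg_left ((ih _).trans ?_) (hq0 u)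
            rw [norm_add_sq_real]
            nlinarith [pow_le_pow_left₀ (norm_nonneg _) (hV u) 2]
      _ = ‖a‖ ^ 2 + (m + 1) * c ^ 2 + 2 * inner ℝ a (∑ u, q u • V u) := by
          simp only [mul_add, Finset.sum_add_distrib, ← Finset.sum_mul, hq1, inner_sum,
            real_inner_smul_right, Finset.mul_sum]
          simp only [mul_left_comm, one_mul]
      _ = _ := by
          rw [hmean, inner_zero_right]
          push_cast
          ring

/-- Concentration of the norm of a sum of `m` independent centred vectors of diameter at
most `2`, at scale `5 * √(s * m)`. -/
theorem one_sub_exp_le_Pr_norm_sum_le (hq0 : ∀ u, 0 ≤ q u) (hq1 : ∑ u, q u = 1)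
    (hmean : ∑ u, q u • V u = 0) (hV : ∀ u v, ‖V u - V v‖ ≤ 2) {m : ℕ} (hm : 0 < m)
    {s : ℝ} (hs : 1 ≤ s) :
    1 - Real.exp (-s) ≤ Pr q {x : Fin m → U | ‖∑ j, V (x j)‖ ≤ 5 * √(s * m)} := by
  have hm0 : (0 : ℝ) < m := by exact_mod_cast hm
  set r := √(s * m) with hr
  have hr0 : 0 < r := by positivity
  have hr2 : r ^ 2 = s * m := Real.sq_sqrt (by positivity)
  have hnorm : ∀ u, ‖V u‖ ≤ 2 := by
    intro u
    have hdiff : V u = ∑ v, q v • (V u - V v) := by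
      simp only [smul_sub, Finset.sum_sub_distrib, ← Finset.sum_smul, hq1, hmean]
      simp
    rw [hdiff]
    calc ‖∑ v, q v • (V u - V v)‖ ≤ ∑ v, ‖q v • (V u - V v)‖ := norm_sum_le _ _
      _ ≤ ∑ v, q v * 2 := Finset.sum_le_sum fun v _ => by
          rw [norm_smul, Real.norm_of_nonneg (hq0 v)]
          exact mul_le_mul_of_nonneg_left (hV u v) (hq0 v)
      _ = 2 := by rw [← Finset.sum_mul, hq1, one_mul]
  set μ := seqMean q m (fun x => ‖∑ j, V (x j)‖) with hμ
  have hμr : μ ≤ 2 * r := by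
    have h1 := sq_seqMean_le hq0 hq1 m (fun x => ‖∑ j, V (x j)‖)
    have h2 := seqMean_norm_sq_le hq0 hq1 hmean hnorm m 0
    simp only [zero_add, norm_zero] at h2
    refine abs_le_of_sq_le_sq' ?_ (by positivity) |>.2
    nlinarith
  set l := 3 * r / (4 * m) with hl
  have hl0 : 0 < l := by positivity
  have hexp := seqMean_exp_norm_le hq0 hq1 two_pos hV l m 0
  simp only [zero_add] at hexp
  rw [← hμ] at hexp
  have hPr := one_sub_seqMean_le_Pr hq0 hq1 {x : Fin m → U | ‖∑ j, V (x j)‖ ≤ 5 * r}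
    (fun x => Real.exp (-(l * (5 * r))) * Real.exp (l * ‖∑ j, V (x j)‖))
    (fun x => by positivity) (fun x hx => by
      rw [Set.mem_ofPred_eq, not_le] at hx
      rw [← Real.exp_add, Real.one_le_exp_iff]
      nlinarith)
  rw [seqMean_const_mul] at hPr
  refine le_trans (sub_le_sub_left ?_ 1) hPr
  refine (mul_le_mul_of_nonneg_left hexp (Real.exp_pos _).le).trans ?_
  rw [← Real.exp_add, Real.exp_le_exp]
  have hlr : l * r = 3 / 4 * s := by
    rw [hl, div_mul_eq_mul_div, mul_assoc, ← sq, hr2]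
    field_simp
  have hml : m * l ^ 2 = 9 / 16 * s := by
    rw [hl, div_pow, mul_pow, hr2]
    field_simp; norm_num
  nlinarith [mul_le_mul_of_nonneg_left hμr hl0.le]

end SeqMean

section Counting

variable {U : Type*} [Fintype U] {n m : ℕ}

theorem sum_kcount (h : U → Fin n) (x : Fin m → U) : ∑ i, (kcount h x i : ℝ) = m := by
  have := Finset.card_eq_sum_card_fiberwise (s := (Finset.univ : Finset (Fin m)))
    (t := (Finset.univ : Finset (Fin n))) (f := fun j => h (x j)) (fun _ _ => by simp)
  rw [Finset.card_univ, Fintype.card_fin] at this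
  unfold kcount
  exact_mod_cast this.symm

theorem collEst_eq (h : U → Fin n) (x : Fin m → U) :
    collEst h x = (∑ i, (kcount h x i : ℝ) ^ 2 - m) / (m * (m - 1)) := by
  unfold collEst
  rw [← Finset.sum_div]
  congr 1
  rw [← sum_kcount h x, ← Finset.sum_sub_distrib]
  exact Finset.sum_congr rfl fun i _ => by ring

theorem sum_single_sub (h : U → Fin n) (p : Fin n → ℝ) (x : Fin m → U) :
    ∑ j, (EuclideanSpace.single (h (x j)) (1 : ℝ) - WithLp.toLp 2 p) =
      WithLp.toLp 2 (fun i => (kcount h x i : ℝ)) - (m : ℝ) • WithLp.toLp 2 p := by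
  ext i
  simp [kcount, Finset.sum_apply, Pi.single_apply, eq_comm]

end Counting

theorem abs_collision_ratio_sub_one_le {n m ε s P K r : ℝ} (hn : 24 < n) (hε0 : 0 < ε)
    (hε : ε < 1 / 3) (hs : 1 ≤ s) (hmn : m * ε ^ 2 = n * s) (hP0 : 0 < P) (hP1 : P ≤ 1)
    (hnP : 1 ≤ n * P ^ 2) (hr : r ^ 2 = s * m) (hK : |K - m * P| ≤ 5 * r) :
    |(K ^ 2 - m) / (m * (m - 1)) * (1 / P ^ 2) - 1| ≤ 22 * ε := by
  have hm : 216 ≤ m := by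
    have : ε ^ 2 ≤ 1 / 9 := by nlinarith
    have : 24 ≤ n * s := by nlinarith
    by_contra! hlt
    nlinarith [sq_nonneg ε]
  have hm0 : 0 < m := by linarith
  have hm1 : 0 < m - 1 := by linarith
  have hrP : r ≤ ε * m * P := by
    refine abs_le_of_sq_le_sq' ?_ (by positivity) |>.2
    calc r ^ 2 = s * m * 1 := by rw [hr, mul_one]
      _ ≤ s * m * (n * P ^ 2) := mul_le_mul_of_nonneg_left hnP (by positivity)
      _ = (m * ε ^ 2) * (m * P ^ 2) := by rw [hmn]; ring
      _ = (ε * m * P) ^ 2 := by ring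
  set A := K / (m * P) with hA
  have hKA : K = A * (m * P) := by rw [hA]; field_simp
  have hA1 : |A - 1| ≤ 5 * ε := by
    have : K - m * P = (A - 1) * (m * P) := by rw [hKA]; ring
    rw [this, abs_mul, abs_of_pos (by positivity : 0 < m * P)] at hK
    refine le_of_mul_le_mul_right (hK.trans ?_) (by positivity : 0 < m * P)
    linarith
  obtain ⟨hA2, hA3⟩ := abs_le.1 hA1
  have hAu : A ^ 2 - 1 ≤ 55 / 3 * ε := by nlinarith
  have hAl : -(55 / 3 * ε) ≤ A ^ 2 - 1 := by nlinarith [sq_nonneg (A - 1)]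
  have hratio : (K ^ 2 - m) / (m * (m - 1)) * (1 / P ^ 2) - 1 =
      (m * (A ^ 2 - 1) + 1 - 1 / P ^ 2) / (m - 1) := by
    rw [hKA]; field_simp; ring
  have hP2 : 1 ≤ 1 / P ^ 2 := by
    rw [le_div_iff₀ (by positivity)]; nlinarith
  have hPn : 1 / P ^ 2 ≤ n := by
    rw [div_le_iff₀ (by positivity)]; exact hnP
  have hnm : n ≤ m * (ε / 3) := by nlinarith [mul_pos hm0 hε0]
  rw [hratio, abs_div, abs_of_pos hm1, div_le_iff₀ hm1, abs_le]
  constructor <;> nlinarith [mul_le_mul_of_nonneg_left hAu hm0.le,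
    mul_le_mul_of_nonneg_left hAl hm0.le, mul_le_mul_of_nonneg_right hm hε0.le]

/-- Corollary 5 of the paper: For all `n > 24`, `0 < ε < 1/3`, `δ > 0`,
if `m = ε⁻² n^(1+δ)`, then with probability at least `1 − (10/9) e^(−n^δ)` the
empirical collision probability estimates `‖p‖²` within relative error `22 ε`. -/
theorem collision_estimator_cor1
    {U : Type*} [Fintype U] [Nonempty U]
    (n : ℕ) (hn : 24 < n)
    (q : U → ℝ) (hq0 : ∀ u, 0 ≤ q u) (hq1 : ∑ u, q u = 1)
    (h : U → Fin n)
    (p : Fin n → ℝ)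
    (hp : ∀ i, p i = ∑ u ∈ Finset.univ.filter (fun u => h u = i), q u)
    (m : ℕ) (hm : 2 ≤ m)
    (ε δ : ℝ) (hε0 : 0 < ε) (hε : ε < 1 / 3) (hδ : 0 < δ)
    (hmn : (m : ℝ) = ε ^ (-2 : ℝ) * (n : ℝ) ^ (1 + δ)) :
    1 - (10 / 9) * Real.exp (-(n : ℝ) ^ δ)
      ≤ Pr q {x : Fin m → U |
          |collEst h x * (1 / ∑ i : Fin n, p i ^ 2) - 1| ≤ 22 * ε} := by
  have hn0 : (0 : ℝ) < n := by exact_mod_cast (by omega : 0 < n)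
  have hn1 : (24 : ℝ) < n := by exact_mod_cast hn
  set s : ℝ := (n : ℝ) ^ δ with hs_def
  have hs : 1 ≤ s := Real.one_le_rpow (by linarith) hδ.le
  have hmε : (m : ℝ) * ε ^ 2 = n * s := by
    rw [hmn, Real.rpow_add hn0, Real.rpow_one, Real.rpow_neg hε0.le, Real.rpow_two, ← hs_def]
    field_simp
  have hp0 : ∀ i, 0 ≤ p i := fun i => by
    rw [hp]; exact Finset.sum_nonneg fun u _ => hq0 u
  have hp1 : ∑ i, p i = 1 := by
    simp only [hp]
    rw [← hq1]
    exact Finset.sum_fiberwise Finset.univ h q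
  set pv : EuclideanSpace ℝ (Fin n) := WithLp.toLp 2 p with hpv
  have hPsq : ‖pv‖ ^ 2 = ∑ i, p i ^ 2 := by simp [EuclideanSpace.norm_sq_eq, hpv]
  have hnP : 1 ≤ n * ‖pv‖ ^ 2 := by
    have := sq_sum_le_card_mul_sum_sq (s := (Finset.univ : Finset (Fin n))) (f := p)
    rw [hp1, Finset.card_univ, Fintype.card_fin, ← hPsq] at this
    linarith
  have hP0 : 0 < ‖pv‖ := by
    refine lt_of_le_of_ne (norm_nonneg _) fun h0 => ?_
    rw [← h0] at hnP
    norm_num at hnP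
  have hP1 : ‖pv‖ ≤ 1 := by
    have : ‖pv‖ ^ 2 ≤ 1 := by
      rw [hPsq, ← hp1]
      refine Finset.sum_le_sum fun i _ => ?_
      have : p i ≤ 1 := hp1 ▸ Finset.single_le_sum (fun j _ => hp0 j) (Finset.mem_univ i)
      nlinarith [hp0 i]
    nlinarith
  set V : U → EuclideanSpace ℝ (Fin n) := fun u => EuclideanSpace.single (h u) 1 - pv with hV
  have hmean : ∑ u, q u • V u = 0 := by
    simp only [hV, smul_sub, Finset.sum_sub_distrib, ← Finset.sum_smul, hq1, one_smul]
    rw [sub_eq_zero]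
    ext i
    simp [hpv, hp, Finset.sum_filter, Pi.single_apply, eq_comm]
  have hdiam : ∀ u v, ‖V u - V v‖ ≤ 2 := by
    intro u v
    rw [sub_sub_sub_cancel_right]
    refine (norm_sub_le _ _).trans ?_
    simp only [PiLp.norm_single, norm_one]
    norm_num
  have hconc := one_sub_exp_le_Pr_norm_sum_le hq0 hq1 hmean hdiam (by omega : 0 < m) hs
  have hsub : {x : Fin m → U | ‖∑ j, V (x j)‖ ≤ 5 * √(s * m)} ⊆
      {x | |collEst h x * (1 / ∑ i : Fin n, p i ^ 2) - 1| ≤ 22 * ε} := by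
    intro x hx
    rw [Set.mem_ofPred_eq] at hx ⊢
    rw [sum_single_sub, ← hpv] at hx
    have hK := (abs_norm_sub_norm_le _ _).trans hx
    rw [norm_smul, Real.norm_natCast] at hK
    have hres := abs_collision_ratio_sub_one_le hn1 hε0 hε hs hmε hP0 hP1 hnP
      (Real.sq_sqrt (by positivity)) hK
    rw [collEst_eq, ← hPsq]
    simpa [EuclideanSpace.norm_sq_eq] using hres
  have hmono : Pr q {x : Fin m → U | ‖∑ j, V (x j)‖ ≤ 5 * √(s * m)} ≤
      Pr q {x | |collEst h x * (1 / ∑ i : Fin n, p i ^ 2) - 1| ≤ 22 * ε} :=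
    Finset.sum_le_sum fun x _ => Set.indicator_le_indicator_of_subset hsub
      (fun y => Finset.prod_nonneg fun j _ => hq0 (y j)) x
  linarith [Real.exp_pos (-s)]
end

section
/- For all n > 24, 0 < ε < 1/3, δ > 0, s > 0, and m = ε^{-2} n^{1+δ}, one has P(C_s) ≥ 1 − (10/9) e^{−s²/4}, where C_s = { x ∈ U^m : d_T(x, A) < s } and U^m carries the product measure. -/
/-- Talagrand's convex distance from a point `x ∈ Ω^m` to a set `A ⊆ Ω^m`:
`d_T(x,A) = sup { inf_{y ∈ A} ∑ j, α j · 1(x j ≠ y j) : α j ≥ 0, ∑ j, α j ² ≤ 1 }`. -/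
noncomputable def convexDist {Ω : Type*} [DecidableEq Ω] {m : ℕ}
    (x : Fin m → Ω) (A : Set (Fin m → Ω)) : ℝ :=
  sSup { z : ℝ | ∃ α : Fin m → ℝ, (∀ j, 0 ≤ α j) ∧ (∑ j, α j ^ 2) ≤ 1 ∧
    z = sInf { t : ℝ | ∃ y ∈ A, t = ∑ j, if x j ≠ y j then α j else 0 } }

/-- Expectation of `f` under the product measure induced by `q`. -/
noncomputable def expect {U : Type*} [Fintype U] {m : ℕ} (q : U → ℝ)
    (f : (Fin m → U) → ℝ) : ℝ :=
  ∑ x : Fin m → U, (∏ j, q (x j)) * f x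

section Expectation

variable {U : Type*} [Fintype U] {m : ℕ} {q : U → ℝ}

theorem Pr_eq_expect (S : Set (Fin m → U)) :
    Pr q S = expect q (S.indicator fun _ => 1) := by
  unfold Pr expect
  refine Finset.sum_congr rfl fun x _ => ?_
  by_cases hx : x ∈ S <;> simp [hx]

theorem expect_add (f g : (Fin m → U) → ℝ) :
    expect q (fun x => f x + g x) = expect q f + expect q g := by
  simp [expect, mul_add, Finset.sum_add_distrib]

theorem expect_const_mul (c : ℝ) (f : (Fin m → U) → ℝ) :
    expect q (fun x => c * f x) = c * expect q f := by
  simp only [expect, Finset.mul_sum]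
  exact Finset.sum_congr rfl fun x _ => by ring

theorem expect_sum {ι : Type*} (s : Finset ι) (f : ι → (Fin m → U) → ℝ) :
    expect q (fun x => ∑ i ∈ s, f i x) = ∑ i ∈ s, expect q (f i) := by
  simp only [expect, Finset.mul_sum]
  exact Finset.sum_comm

theorem expect_mono (hq0 : ∀ u, 0 ≤ q u) {f g : (Fin m → U) → ℝ} (hfg : ∀ x, f x ≤ g x) :
    expect q f ≤ expect q g :=
  Finset.sum_le_sum fun x _ =>
    mul_le_mul_of_nonneg_left (hfg x) (Finset.prod_nonneg fun j _ => hq0 (x j))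

theorem expect_zero (f : (Fin 0 → U) → ℝ) : expect q f = f default := by
  simp [expect]

theorem expect_succ (f : (Fin (m + 1) → U) → ℝ) :
    expect q f = ∑ u, q u * expect q fun x : Fin m → U => f (Fin.cons u x) := by
  unfold expect
  rw [← (Fin.consEquiv fun _ : Fin (m + 1) => U).sum_comp, Fintype.sum_prod_type]
  refine Finset.sum_congr rfl fun u _ => ?_
  rw [Finset.mul_sum]
  refine Finset.sum_congr rfl fun x _ => ?_
  simp [Fin.consEquiv, Fin.prod_univ_succ, mul_assoc]

theorem expect_const (hq1 : ∑ u, q u = 1) (c : ℝ) :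
    expect q (fun _ : Fin m → U => c) = c := by
  induction m with
  | zero => rw [expect_zero]
  | succ m ih => rw [expect_succ]; simp only [ih]; rw [← Finset.sum_mul, hq1, one_mul]

theorem Pr_mono (hq0 : ∀ u, 0 ≤ q u) {S T : Set (Fin m → U)} (hST : S ⊆ T) :
    Pr q S ≤ Pr q T := by
  rw [Pr_eq_expect, Pr_eq_expect]
  exact expect_mono hq0 fun x => Set.indicator_le_indicator_of_subset hST (fun _ => zero_le_one) x

theorem Pr_nonneg (hq0 : ∀ u, 0 ≤ q u) (S : Set (Fin m → U)) : 0 ≤ Pr q S :=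
  Finset.sum_nonneg fun x _ => Set.indicator_nonneg
    (fun y _ => Finset.prod_nonneg fun j _ => hq0 (y j)) x

theorem Pr_add_Pr_compl (hq1 : ∑ u, q u = 1) (S : Set (Fin m → U)) :
    Pr q S + Pr q Sᶜ = 1 := by
  rw [Pr_eq_expect, Pr_eq_expect, ← expect_add]
  refine Eq.trans (congrArg (expect q) (funext fun x => ?_)) (expect_const hq1 1)
  by_cases hx : x ∈ S <;> simp [hx]

theorem Pr_le_one (hq0 : ∀ u, 0 ≤ q u) (hq1 : ∑ u, q u = 1) (S : Set (Fin m → U)) :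
    Pr q S ≤ 1 := by
  linarith [Pr_add_Pr_compl hq1 S, Pr_nonneg hq0 Sᶜ]

theorem Pr_succ (S : Set (Fin (m + 1) → U)) :
    Pr q S = ∑ u, q u * Pr q {x : Fin m → U | Fin.cons u x ∈ S} := by
  simp only [Pr_eq_expect, expect_succ]
  rfl

theorem Pr_le_expect (hq0 : ∀ u, 0 ≤ q u) {S : Set (Fin m → U)} {f : (Fin m → U) → ℝ}
    (hf : ∀ x, 0 ≤ f x) (hS : ∀ x ∈ S, 1 ≤ f x) : Pr q S ≤ expect q f := by
  rw [Pr_eq_expect]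
  refine expect_mono hq0 fun x => ?_
  by_cases hx : x ∈ S
  · simpa [hx] using hS x hx
  · simpa [hx] using hf x

end Expectation

section Holder

variable {U : Type*} [Fintype U] {m : ℕ} {q : U → ℝ}

/-- Hölder's inequality in exponential form, for two functions with bounded exponential
moments. -/
theorem expect_exp_convex_comb_le (hq0 : ∀ u, 0 ≤ q u) {f g : (Fin m → U) → ℝ} {a b l : ℝ}
    (ha : 0 < a) (hb : 0 < b) (hf : a * expect q (fun x => Real.exp (f x)) ≤ 1)
    (hg : b * expect q (fun x => Real.exp (g x)) ≤ 1) (hl0 : 0 ≤ l) (hl1 : l ≤ 1) :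
    expect q (fun x => Real.exp (l * f x + (1 - l) * g x))
      ≤ Real.exp (-(l * Real.log a + (1 - l) * Real.log b)) := by
  have key : ∀ x, Real.exp (l * f x + (1 - l) * g x)
      ≤ Real.exp (-(l * Real.log a + (1 - l) * Real.log b)) *
        ((l * a) * Real.exp (f x) + ((1 - l) * b) * Real.exp (g x)) := by
    intro x
    have h := convexOn_exp.2 (Set.mem_univ (f x + Real.log a)) (Set.mem_univ (g x + Real.log b))
      hl0 (sub_nonneg.2 hl1) (by ring)
    simp only [smul_eq_mul, Real.exp_add (f x), Real.exp_add (g x), Real.exp_log ha,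
      Real.exp_log hb] at h
    calc Real.exp (l * f x + (1 - l) * g x)
        = Real.exp (-(l * Real.log a + (1 - l) * Real.log b)) *
          Real.exp (l * (f x + Real.log a) + (1 - l) * (g x + Real.log b)) := by
          rw [← Real.exp_add]; ring_nf
      _ ≤ _ := by
          refine mul_le_mul_of_nonneg_left (h.trans (le_of_eq ?_)) (Real.exp_pos _).le
          ring
  refine (expect_mono hq0 key).trans ?_
  rw [expect_const_mul, expect_add, expect_const_mul, expect_const_mul]
  refine mul_le_of_le_one_right (Real.exp_pos _).le ?_
  nlinarith

end Holder

section Talagrand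

theorem exp_sub_sq_add_exp_neg_le_two {t : ℝ} (ht0 : 0 ≤ t) (ht : t ≤ 1 / 2) :
    Real.exp (t - t ^ 2) + Real.exp (-t) ≤ 2 := by
  have h1 : Real.exp (-t) ≤ 1 - t + t ^ 2 / 2 := by
    have h := Real.quadratic_le_exp_of_nonneg ht0
    have h2 : Real.exp (-t) * Real.exp t = 1 := by rw [← Real.exp_add]; simp
    have h3 : 0 < 1 - t + t ^ 2 / 2 := by nlinarith
    by_contra! hlt
    have := mul_lt_mul hlt h (by positivity) (Real.exp_pos _).le
    nlinarith [pow_nonneg ht0 4]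
  have hu0 : 0 ≤ t - t ^ 2 := by nlinarith
  have hu1 : t - t ^ 2 ≤ 1 := by nlinarith
  have h2 := Real.exp_bound' hu0 hu1 (n := 3) (by norm_num)
  norm_num [Finset.sum_range_succ, Nat.factorial] at h2
  have h3 : t ^ 3 * (-1 + t / 2 + (1 - t) ^ 3 * (2 / 9)) ≤ 0 := by
    refine mul_nonpos_of_nonneg_of_nonpos (by positivity) ?_
    have : (1 - t) ^ 3 ≤ 1 := pow_le_one₀ (by linarith) (by linarith)
    linarith
  nlinarith

theorem exp_quarter_le : Real.exp (1 / 4) ≤ 11 / 8 := by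
  have h := Real.exp_bound' (x := 1 / 4) (by norm_num) (by norm_num) (n := 3) (by norm_num)
  norm_num [Finset.sum_range_succ, Nat.factorial] at h ⊢
  linarith

/-- The one-dimensional optimization in the induction step of Talagrand's inequality. -/
theorem exists_weight_exp_le {r : ℝ} (hr0 : 0 < r) (hr1 : r ≤ 1) :
    ∃ l : ℝ, 0 ≤ l ∧ l ≤ 1 ∧ Real.exp ((1 - l) ^ 2 / 4 - l * Real.log r) ≤ 2 - r := by
  have hlog : Real.log r ≤ 0 := Real.log_nonpos hr0.le hr1
  rcases le_total (-(1 / 2)) (Real.log r) with h | h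
  · refine ⟨1 + 2 * Real.log r, by linarith, by linarith, ?_⟩
    have := exp_sub_sq_add_exp_neg_le_two (t := -Real.log r) (by linarith) (by linarith)
    rw [neg_neg, Real.exp_log hr0] at this
    have e : (1 - (1 + 2 * Real.log r)) ^ 2 / 4 - (1 + 2 * Real.log r) * Real.log r
        = -Real.log r - (-Real.log r) ^ 2 := by ring
    rw [e]
    linarith
  · refine ⟨0, le_rfl, zero_le_one, ?_⟩
    have hr : r ≤ Real.exp (-(1 / 2)) := (Real.log_le_iff_le_exp hr0).1 h
    have := exp_sub_sq_add_exp_neg_le_two (t := 1 / 2) (by norm_num) le_rfl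
    norm_num at this hr ⊢
    linarith

variable {U : Type*} [DecidableEq U] {m : ℕ}

/-- The vector `v` lies in the convex hull of the mismatch vectors between `x` and the points
of `A`, up to increasing coordinates; phrased by duality. -/
def DominatesMismatch (x : Fin m → U) (A : Set (Fin m → U)) (v : Fin m → ℝ) : Prop :=
  ∀ α : Fin m → ℝ, (∀ j, 0 ≤ α j) →
    ∃ y ∈ A, (∑ j, if x j ≠ y j then α j else 0) ≤ ∑ j, α j * v j

theorem DominatesMismatch.convexDist_le {x : Fin m → U} {A : Set (Fin m → U)} {v : Fin m → ℝ}
    (hv : DominatesMismatch x A v) : convexDist x A ≤ √(∑ j, v j ^ 2) := by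
  refine Real.sSup_le ?_ (Real.sqrt_nonneg _)
  rintro z ⟨α, hα0, hα1, rfl⟩
  obtain ⟨y, hy, hle⟩ := hv α hα0
  have hbdd : BddBelow {t : ℝ | ∃ y ∈ A, t = ∑ j, if x j ≠ y j then α j else 0} := by
    refine ⟨0, ?_⟩
    rintro t ⟨y, -, rfl⟩
    exact Finset.sum_nonneg fun j _ => by split_ifs <;> simp [hα0 j]
  refine (csInf_le hbdd ⟨y, hy, rfl⟩).trans (hle.trans (Real.le_sqrt_of_sq_le ?_))
  refine (Finset.sum_mul_sq_le_sq_mul_sq _ _ _).trans ?_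
  exact mul_le_of_le_one_left (Finset.sum_nonneg fun j _ => sq_nonneg _) hα1

theorem DominatesMismatch.cons_one {x : Fin m → U} {A : Set (Fin (m + 1) → U)} {v : Fin m → ℝ}
    (hv : DominatesMismatch x {y | ∃ u, Fin.cons u y ∈ A} v) (u : U) :
    DominatesMismatch (Fin.cons u x : Fin (m + 1) → U) A (Fin.cons 1 v) := by
  intro α hα
  obtain ⟨y, ⟨w, hw⟩, hle⟩ := hv (fun j => α j.succ) fun j => hα _
  refine ⟨Fin.cons w y, hw, ?_⟩
  simp only [Fin.sum_univ_succ, Fin.cons_zero, Fin.cons_succ, mul_one]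
  refine add_le_add ?_ hle
  split_ifs <;> simp [hα 0]

theorem DominatesMismatch.cons_zero {x : Fin m → U} {A : Set (Fin (m + 1) → U)} {v : Fin m → ℝ}
    {u : U} (hv : DominatesMismatch x {y | Fin.cons u y ∈ A} v) :
    DominatesMismatch (Fin.cons u x : Fin (m + 1) → U) A (Fin.cons 0 v) := by
  intro α hα
  obtain ⟨y, hy, hle⟩ := hv (fun j => α j.succ) fun j => hα _
  refine ⟨Fin.cons u y, hy, ?_⟩
  simpa only [Fin.sum_univ_succ, Fin.cons_zero, Fin.cons_succ, mul_zero, ne_eq,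
    not_true_eq_false, if_false, zero_add] using hle

theorem DominatesMismatch.convex_comb {x : Fin m → U} {A : Set (Fin m → U)} {v w : Fin m → ℝ}
    (hv : DominatesMismatch x A v) (hw : DominatesMismatch x A w) {l : ℝ} (hl0 : 0 ≤ l)
    (hl1 : l ≤ 1) : DominatesMismatch x A fun j => l * v j + (1 - l) * w j := by
  intro α hα
  obtain ⟨y, hy, hyle⟩ := hv α hα
  obtain ⟨z, hz, hzle⟩ := hw α hα
  have e : ∑ j, α j * (l * v j + (1 - l) * w j)
      = l * ∑ j, α j * v j + (1 - l) * ∑ j, α j * w j := by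
    rw [Finset.mul_sum, Finset.mul_sum, ← Finset.sum_add_distrib]
    exact Finset.sum_congr rfl fun j _ => by ring
  simp only [e]
  rcases le_total (∑ j, α j * v j) (∑ j, α j * w j) with h | h
  · exact ⟨y, hy, by nlinarith⟩
  · exact ⟨z, hz, by nlinarith⟩

theorem sum_sq_convex_comb_le (v w : Fin m → ℝ) {l : ℝ} (hl0 : 0 ≤ l) (hl1 : l ≤ 1) :
    ∑ j, (l * v j + (1 - l) * w j) ^ 2 ≤ l * ∑ j, v j ^ 2 + (1 - l) * ∑ j, w j ^ 2 := by
  rw [Finset.mul_sum, Finset.mul_sum, ← Finset.sum_add_distrib]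
  refine Finset.sum_le_sum fun j _ => ?_
  nlinarith [mul_nonneg (mul_nonneg hl0 (sub_nonneg.2 hl1)) (sq_nonneg (v j - w j))]

variable [Fintype U] {q : U → ℝ}

/-- **Talagrand's inequality**, exponential-moment form. -/
theorem exists_dominatesMismatch_expect_exp_le (hq0 : ∀ u, 0 ≤ q u) (hq1 : ∑ u, q u = 1)
    (A : Set (Fin m → U)) (hA : A.Nonempty) :
    ∃ v : (Fin m → U) → Fin m → ℝ, (∀ x, DominatesMismatch x A (v x)) ∧
      Pr q A * expect q (fun x => Real.exp ((∑ j, v x j ^ 2) / 4)) ≤ 1 := by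
  induction m with
  | zero =>
    refine ⟨fun _ => 0, fun x α _ => ?_, ?_⟩
    · obtain ⟨y, hy⟩ := hA
      exact ⟨y, hy, by simp⟩
    · rw [expect_zero]
      simpa using Pr_le_one hq0 hq1 A
  | succ m ih =>
    set B : Set (Fin m → U) := {y | ∃ u, Fin.cons u y ∈ A} with hB
    have hBne : B.Nonempty := by
      obtain ⟨y, hy⟩ := hA
      exact ⟨Fin.tail y, y 0, by rwa [Fin.cons_self_tail]⟩
    obtain ⟨vB, hvB, hEB⟩ := ih B hBne
    have hb0 : 0 ≤ Pr q B := Pr_nonneg hq0 B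
    have slice : ∀ u : U, ∃ w : (Fin m → U) → Fin (m + 1) → ℝ,
        (∀ x, DominatesMismatch (Fin.cons u x : Fin (m + 1) → U) A (w x)) ∧
        Pr q B ^ 2 * expect q (fun x => Real.exp ((∑ j, w x j ^ 2) / 4))
          ≤ 2 * Pr q B - Pr q {x : Fin m → U | Fin.cons u x ∈ A} := by
      intro u
      set a := Pr q {x : Fin m → U | Fin.cons u x ∈ A} with ha
      have ha0 : 0 ≤ a := Pr_nonneg hq0 _
      have hab : a ≤ Pr q B := Pr_mono hq0 fun x hx => ⟨u, hx⟩
      rcases ha0.eq_or_lt with ha0 | ha0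
      · refine ⟨fun x => Fin.cons 1 (vB x), fun x => (hvB x).cons_one u, ?_⟩
        simp only [Fin.sum_univ_succ, Fin.cons_zero, Fin.cons_succ, one_pow, add_div,
          Real.exp_add, expect_const_mul]
        have h1 := exp_quarter_le
        have h2 := mul_le_mul_of_nonneg_left hEB (mul_nonneg hb0 (Real.exp_pos (1 / 4)).le)
        nlinarith
      · have hb : 0 < Pr q B := ha0.trans_le hab
        have hAu : {x : Fin m → U | Fin.cons u x ∈ A}.Nonempty := by
          by_contra hne
          rw [Set.not_nonempty_iff_eq_empty] at hne
          rw [ha, hne] at ha0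
          simp [Pr] at ha0
        obtain ⟨vA, hvA, hEA⟩ := ih _ hAu
        obtain ⟨l, hl0, hl1, hl⟩ := exists_weight_exp_le (div_pos ha0 hb) ((div_le_one hb).2 hab)
        refine ⟨fun x j => l * (Fin.cons 0 (vA x) : Fin (m + 1) → ℝ) j
          + (1 - l) * (Fin.cons 1 (vB x) : Fin (m + 1) → ℝ) j,
          fun x => (hvA x).cons_zero.convex_comb ((hvB x).cons_one u) hl0 hl1, ?_⟩
        have hH := expect_exp_convex_comb_le hq0 ha0 hb hEA hEB hl0 hl1
        have hE : expect q (fun x : Fin m → U => Real.exp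
            ((∑ j, (l * (Fin.cons 0 (vA x) : Fin (m + 1) → ℝ) j
              + (1 - l) * (Fin.cons 1 (vB x) : Fin (m + 1) → ℝ) j) ^ 2) / 4))
            ≤ Real.exp ((1 - l) ^ 2 / 4) *
              Real.exp (-(l * Real.log a + (1 - l) * Real.log (Pr q B))) := by
          refine le_trans ?_ (mul_le_mul_of_nonneg_left hH (Real.exp_pos _).le)
          rw [← expect_const_mul]
          refine expect_mono hq0 fun x => ?_
          rw [← Real.exp_add, Real.exp_le_exp]
          simp only [Fin.sum_univ_succ, Fin.cons_zero, Fin.cons_succ]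
          linarith [sum_sq_convex_comb_le (vA x) (vB x) hl0 hl1]
        have hexp : Real.exp ((1 - l) ^ 2 / 4) *
              Real.exp (-(l * Real.log a + (1 - l) * Real.log (Pr q B))) * Pr q B
            = Real.exp ((1 - l) ^ 2 / 4 - l * Real.log (a / Pr q B)) := by
          nth_rewrite 2 [← Real.exp_log hb]
          rw [← Real.exp_add, ← Real.exp_add, Real.log_div ha0.ne' hb.ne']
          ring_nf
        calc _ ≤ Pr q B ^ 2 * (Real.exp ((1 - l) ^ 2 / 4) *
              Real.exp (-(l * Real.log a + (1 - l) * Real.log (Pr q B)))) :=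
              mul_le_mul_of_nonneg_left hE (sq_nonneg _)
          _ = Pr q B * Real.exp ((1 - l) ^ 2 / 4 - l * Real.log (a / Pr q B)) := by
              rw [← hexp]; ring
          _ ≤ Pr q B * (2 - a / Pr q B) := mul_le_mul_of_nonneg_left hl hb0
          _ = 2 * Pr q B - a := by field_simp
    choose w hw hwE using slice
    refine ⟨fun x => w (x 0) (Fin.tail x), fun x => ?_, ?_⟩
    · simpa only [Fin.cons_self_tail] using hw (x 0) (Fin.tail x)
    · set E := expect q (fun x => Real.exp ((∑ j, w (x 0) (Fin.tail x) j ^ 2) / 4)) with hEdef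
      have hsum : Pr q B ^ 2 * E ≤ 2 * Pr q B - Pr q A := by
        rw [hEdef, expect_succ, Pr_succ A, Finset.mul_sum]
        simp only [Fin.cons_zero, Fin.tail_cons]
        calc _ = ∑ u, q u * (Pr q B ^ 2 *
                expect q fun x => Real.exp ((∑ j, w u x j ^ 2) / 4)) :=
              Finset.sum_congr rfl fun u _ => by ring
          _ ≤ ∑ u, q u * (2 * Pr q B - Pr q {x : Fin m → U | Fin.cons u x ∈ A}) :=
              Finset.sum_le_sum fun u _ => mul_le_mul_of_nonneg_left (hwE u) (hq0 u)
          _ = _ := by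
              simp only [mul_sub, Finset.sum_sub_distrib]
              rw [← Finset.sum_mul, hq1, one_mul]
      have hA0 : 0 ≤ Pr q A := Pr_nonneg hq0 A
      rcases hb0.eq_or_lt with hb | hb
      · rw [← hb] at hsum
        have : Pr q A = 0 := by nlinarith
        rw [this]
        norm_num
      · have h1 := mul_le_mul_of_nonneg_left hsum hA0
        have h2 : Pr q B ^ 2 * (Pr q A * E) ≤ Pr q B ^ 2 * 1 := by
          nlinarith [sq_nonneg (Pr q B - Pr q A)]
        exact le_of_mul_le_mul_left h2 (by positivity)

/-- **Talagrand's convex distance inequality**, tail form. -/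
theorem Pr_mul_Pr_le_convexDist (hq0 : ∀ u, 0 ≤ q u) (hq1 : ∑ u, q u = 1)
    (A : Set (Fin m → U)) {s : ℝ} (hs : 0 ≤ s) :
    Pr q A * Pr q {x | s ≤ convexDist x A} ≤ Real.exp (-s ^ 2 / 4) := by
  rcases A.eq_empty_or_nonempty with rfl | hA
  · simpa [Pr] using (Real.exp_pos _).le
  obtain ⟨v, hv, hE⟩ := exists_dominatesMismatch_expect_exp_le hq0 hq1 A hA
  have h1 : Pr q {x | s ≤ convexDist x A}
      ≤ expect q (fun x => Real.exp (-s ^ 2 / 4) * Real.exp ((∑ j, v x j ^ 2) / 4)) := by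
    refine Pr_le_expect hq0 (fun x => by positivity) fun x hx => ?_
    have hsq : s ^ 2 ≤ ∑ j, v x j ^ 2 :=
      (Real.le_sqrt hs (Finset.sum_nonneg fun j _ => sq_nonneg _)).1
        (le_trans hx (hv x).convexDist_le)
    rw [← Real.exp_add]
    exact Real.one_le_exp (by linarith)
  rw [expect_const_mul] at h1
  have := mul_le_mul_of_nonneg_left h1 (Pr_nonneg hq0 A)
  nlinarith [mul_le_mul_of_nonneg_left hE (Real.exp_pos (-s ^ 2 / 4)).le]

end Talagrand

section Moments

variable {U : Type*} {n m : ℕ} {q : U → ℝ} {h : U → Fin n} {p : Fin n → ℝ}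

theorem kcount_cons [Fintype U] (u : U) (x : Fin m → U) (i : Fin n) :
    (kcount h (Fin.cons u x : Fin (m + 1) → U) i : ℝ)
      = kcount h x i + if h u = i then 1 else 0 := by
  unfold kcount
  rw [Finset.card_filter, Finset.card_filter, Fin.sum_univ_succ]
  push_cast
  simp [add_comm]

/-- The number of ordered pairs of distinct positions carrying colliding keys. -/
noncomputable def collPairs [Fintype U] (h : U → Fin n) (x : Fin m → U) : ℝ :=
  ∑ i, (kcount h x i : ℝ) * ((kcount h x i : ℝ) - 1)

theorem collPairs_cons [Fintype U] (u : U) (x : Fin m → U) :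
    collPairs h (Fin.cons u x : Fin (m + 1) → U) = collPairs h x + 2 * kcount h x (h u) := by
  simp only [collPairs, kcount_cons]
  have e : ∀ i, ((kcount h x i : ℝ) + if h u = i then 1 else 0) *
      ((kcount h x i : ℝ) + (if h u = i then 1 else 0) - 1)
      = (kcount h x i : ℝ) * ((kcount h x i : ℝ) - 1)
        + if h u = i then 2 * (kcount h x i : ℝ) else 0 := by
    intro i
    split_ifs <;> ring
  simp [e, Finset.sum_add_distrib]

variable [Fintype U]

theorem sum_mul_comp_eq (hp : ∀ i, p i = ∑ u ∈ Finset.univ.filter (fun u => h u = i), q u)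
    (g : Fin n → ℝ) : ∑ u, q u * g (h u) = ∑ i, p i * g i := by
  rw [← Finset.sum_fiberwise Finset.univ h]
  refine Finset.sum_congr rfl fun i _ => ?_
  rw [hp, Finset.sum_mul]
  refine Finset.sum_congr rfl fun u hu => ?_
  rw [(Finset.mem_filter.1 hu).2]

theorem expect_succ_eq_sum_slots
    (hp : ∀ i, p i = ∑ u ∈ Finset.univ.filter (fun u => h u = i), q u)
    {f : (Fin (m + 1) → U) → ℝ} (F : Fin n → (Fin m → U) → ℝ)
    (hF : ∀ u x, f (Fin.cons u x) = F (h u) x) :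
    expect q f = ∑ i, p i * expect q (F i) := by
  rw [expect_succ, ← sum_mul_comp_eq hp]
  simp only [hF]

theorem expect_add_const_mul_add_const (hq1 : ∑ u, q u = 1) (f g : (Fin m → U) → ℝ) (c d : ℝ) :
    expect q (fun x => (f x + c) * (g x + d))
      = expect q (fun x => f x * g x) + d * expect q f + c * expect q g + c * d := by
  rw [← expect_const (m := m) hq1 (c * d), ← expect_const_mul, ← expect_const_mul, ← expect_add,
    ← expect_add, ← expect_add]
  congr 1
  ext x
  ring

theorem sum_slot_prob (hq1 : ∑ u, q u = 1)
    (hp : ∀ i, p i = ∑ u ∈ Finset.univ.filter (fun u => h u = i), q u) : ∑ i, p i = 1 := by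
  simpa [hq1] using (sum_mul_comp_eq hp fun _ => 1).symm

theorem expect_kcount (hq1 : ∑ u, q u = 1)
    (hp : ∀ i, p i = ∑ u ∈ Finset.univ.filter (fun u => h u = i), q u) (i : Fin n) :
    expect q (fun x : Fin m → U => (kcount h x i : ℝ)) = m * p i := by
  induction m with
  | zero => simp [expect_zero, kcount]
  | succ m ih =>
    rw [expect_succ_eq_sum_slots hp (fun l x => (kcount h x i : ℝ) + if l = i then 1 else 0)
      fun u x => kcount_cons u x i]
    simp only [expect_add, expect_const hq1, ih, mul_add, Finset.sum_add_distrib,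
      ← Finset.sum_mul, sum_slot_prob hq1 hp]
    simp
    ring

theorem expect_kcount_mul_kcount (hq1 : ∑ u, q u = 1)
    (hp : ∀ i, p i = ∑ u ∈ Finset.univ.filter (fun u => h u = i), q u) (i j : Fin n) :
    expect q (fun x : Fin m → U => (kcount h x i : ℝ) * kcount h x j)
      = m * (m - 1) * (p i * p j) + if i = j then m * p i else 0 := by
  induction m with
  | zero => simp [expect_zero, kcount]
  | succ m ih =>
    rw [expect_succ_eq_sum_slots hp (fun l x => ((kcount h x i : ℝ) + if l = i then 1 else 0) *
      ((kcount h x j : ℝ) + if l = j then 1 else 0))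
      fun u x => by rw [kcount_cons, kcount_cons]]
    simp only [expect_add_const_mul_add_const hq1, ih, expect_kcount hq1 hp]
    simp only [mul_add, Finset.sum_add_distrib, ← Finset.sum_mul, sum_slot_prob hq1 hp]
    by_cases hij : i = j
    · subst hij
      simp
      ring
    · simp [hij, Ne.symm hij]
      ring

theorem expect_collPairs (hq1 : ∑ u, q u = 1)
    (hp : ∀ i, p i = ∑ u ∈ Finset.univ.filter (fun u => h u = i), q u) :
    expect q (collPairs h : (Fin m → U) → ℝ) = m * (m - 1) * ∑ i, p i ^ 2 := by
  unfold collPairs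
  rw [expect_sum, Finset.mul_sum]
  refine Finset.sum_congr rfl fun i _ => ?_
  have e := expect_add_const_mul_add_const (m := m) hq1 (fun x => (kcount h x i : ℝ))
    (fun x => (kcount h x i : ℝ)) 0 (-1)
  simp only [add_zero, ← sub_eq_add_neg] at e
  rw [e, expect_kcount_mul_kcount hq1 hp, if_pos rfl, expect_kcount hq1 hp]
  ring

theorem expect_collPairs_mul_kcount (hq1 : ∑ u, q u = 1)
    (hp : ∀ i, p i = ∑ u ∈ Finset.univ.filter (fun u => h u = i), q u) (i : Fin n) :
    expect q (fun x : Fin m → U => collPairs h x * kcount h x i)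
      = m * (m - 1) * (m - 2) * (∑ l, p l ^ 2) * p i + 2 * m * (m - 1) * p i ^ 2 := by
  induction m with
  | zero => simp [expect_zero, kcount]
  | succ m ih =>
    rw [expect_succ_eq_sum_slots hp (fun l x => ((collPairs h x + 2 * kcount h x l) + 0) *
      ((kcount h x i : ℝ) + if l = i then 1 else 0))
      fun u x => by rw [collPairs_cons, kcount_cons, add_zero]]
    simp only [expect_add_const_mul_add_const hq1]
    simp only [add_mul, mul_assoc (2 : ℝ), expect_add, expect_const_mul, ih,
      expect_kcount hq1 hp, expect_collPairs hq1 hp, expect_kcount_mul_kcount hq1 hp]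
    set a := ∑ r, p r ^ 2 with ha
    have e : ∀ l, p l * (m * (m - 1) * (m - 2) * a * p i + 2 * (m * (m - 1) * p i ^ 2)
          + 2 * (m * (m - 1) * (p l * p i) + if l = i then m * p l else 0)
          + (if l = i then 1 else 0) * (m * (m - 1) * a + 2 * (m * p l)))
        = p l * (m * (m - 1) * (m - 2) * a * p i + 2 * (m * (m - 1) * p i ^ 2))
          + 2 * m * (m - 1) * p i * p l ^ 2
          + if l = i then 4 * m * p l ^ 2 + m * (m - 1) * a * p l else 0 := by
      intro l
      split_ifs <;> ring
    simp only [zero_mul, add_zero, e]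
    rw [Finset.sum_add_distrib, Finset.sum_add_distrib, ← Finset.sum_mul, ← Finset.mul_sum,
      sum_slot_prob hq1 hp, ← ha, Finset.sum_ite_eq' Finset.univ i, if_pos (Finset.mem_univ i)]
    push_cast
    ring

theorem expect_collPairs_sq (hq1 : ∑ u, q u = 1)
    (hp : ∀ i, p i = ∑ u ∈ Finset.univ.filter (fun u => h u = i), q u) :
    expect q (fun x : Fin m → U => collPairs h x ^ 2)
      = m * (m - 1) * (m - 2) * (m - 3) * (∑ l, p l ^ 2) ^ 2
        + 4 * m * (m - 1) * (m - 2) * ∑ l, p l ^ 3 + 2 * m * (m - 1) * ∑ l, p l ^ 2 := by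
  induction m with
  | zero => simp [expect_zero, kcount, collPairs]
  | succ m ih =>
    rw [expect_succ_eq_sum_slots hp (fun l x => collPairs h x ^ 2
      + (4 * (collPairs h x * kcount h x l) + 4 * (kcount h x l * kcount h x l)))
      fun u x => by rw [collPairs_cons]; ring]
    simp only [expect_add, expect_const_mul, ih, expect_collPairs_mul_kcount hq1 hp,
      expect_kcount_mul_kcount hq1 hp, if_true]
    rw [Finset.sum_congr rfl fun l _ => mul_add (p l) _ _, Finset.sum_add_distrib,
      ← Finset.sum_mul, sum_slot_prob hq1 hp]
    have e : ∀ l, p l * (4 * (m * (m - 1) * (m - 2) * (∑ r, p r ^ 2) * p l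
        + 2 * m * (m - 1) * p l ^ 2) + 4 * (m * (m - 1) * (p l * p l) + m * p l))
        = (4 * m * (m - 1) * (m - 2) * ∑ r, p r ^ 2) * p l ^ 2
          + 12 * m * (m - 1) * p l ^ 3 + 4 * m * p l ^ 2 := fun l => by ring
    simp only [e, Finset.sum_add_distrib, ← Finset.mul_sum]
    push_cast
    ring

end Moments

section Chebyshev

theorem one_le_card_mul_sum_sq {n : ℕ} {p : Fin n → ℝ} (hp1 : ∑ i, p i = 1) :
    1 ≤ n * ∑ i, p i ^ 2 := by
  have := sq_sum_le_card_mul_sum_sq (s := Finset.univ) (f := p)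
  simpa [hp1] using this

theorem sq_sum_cube_le {ι : Type*} (s : Finset ι) (p : ι → ℝ) :
    (∑ i ∈ s, p i ^ 3) ^ 2 ≤ (∑ i ∈ s, p i ^ 2) ^ 3 := by
  have h1 := Finset.sum_mul_sq_le_sq_mul_sq s p fun i => p i ^ 2
  have h2 : ∑ i ∈ s, (p i ^ 2) ^ 2 ≤ (∑ i ∈ s, p i ^ 2) ^ 2 :=
    Finset.sum_sq_le_sq_sum_of_nonneg fun i _ => sq_nonneg (p i)
  have h3 := mul_le_mul_of_nonneg_left h2 (Finset.sum_nonneg (s := s) fun i _ => sq_nonneg (p i))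
  have e : ∀ i, p i * p i ^ 2 = p i ^ 3 := fun i => by ring
  simp only [e] at h1
  nlinarith

variable {U : Type*} [Fintype U] {n m : ℕ} {q : U → ℝ} {h : U → Fin n} {p : Fin n → ℝ}

theorem expect_sq_relative_error (hq1 : ∑ u, q u = 1)
    (hp : ∀ i, p i = ∑ u ∈ Finset.univ.filter (fun u => h u = i), q u) (hm : 2 ≤ m)
    (ha : 0 < ∑ i, p i ^ 2) :
    expect q (fun x : Fin m → U => (collEst h x * (1 / ∑ i, p i ^ 2) - 1) ^ 2)
      = (2 * ∑ i, p i ^ 2 + 4 * (m - 2) * ∑ i, p i ^ 3 - (4 * m - 6) * (∑ i, p i ^ 2) ^ 2)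
        / (m * (m - 1) * (∑ i, p i ^ 2) ^ 2) := by
  have hm' : (2 : ℝ) ≤ m := by exact_mod_cast hm
  have hm0 : (m : ℝ) ≠ 0 := by linarith
  have hm1 : (m : ℝ) - 1 ≠ 0 := by linarith
  have ha' := ha.ne'
  have e : (fun x : Fin m → U => (collEst h x * (1 / ∑ i, p i ^ 2) - 1) ^ 2)
      = fun x => (1 / (m * (m - 1) * ∑ i, p i ^ 2) ^ 2) * collPairs h x ^ 2
        + ((-2 / (m * (m - 1) * ∑ i, p i ^ 2)) * collPairs h x + 1) := by
    ext x
    have : collEst h x = collPairs h x / (m * (m - 1)) := by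
      rw [collEst, collPairs, Finset.sum_div]
    rw [this]
    field_simp
    ring
  rw [e, expect_add, expect_add, expect_const_mul, expect_const_mul, expect_const hq1,
    expect_collPairs_sq hq1 hp, expect_collPairs hq1 hp]
  field_simp
  ring

/-- Chebyshev's inequality for the empirical collision probability. -/
theorem nine_tenths_le_Pr (hq0 : ∀ u, 0 ≤ q u) (hq1 : ∑ u, q u = 1)
    (hp : ∀ i, p i = ∑ u ∈ Finset.univ.filter (fun u => h u = i), q u) (hn : 25 ≤ n)
    {ε : ℝ} (hε0 : 0 < ε) (hε : ε < 1 / 3) (hmn : (n : ℝ) ≤ ε ^ 2 * m) :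
    9 / 10 ≤ Pr q {y : Fin m → U | |collEst h y * (1 / ∑ i, p i ^ 2) - 1| ≤ 3 * ε} := by
  set a := ∑ i, p i ^ 2 with ha
  set b := ∑ i, p i ^ 3 with hb
  have hna : 1 ≤ n * a := one_le_card_mul_sum_sq (sum_slot_prob hq1 hp)
  have hn' : (25 : ℝ) ≤ n := by exact_mod_cast hn
  have ha0 : 0 < a := by nlinarith
  have hm : (225 : ℝ) ≤ m := by nlinarith
  have hm2 : 2 ≤ m := by
    have : (2 : ℝ) ≤ m := by linarith
    exact_mod_cast this
  have hb2 : b ^ 2 ≤ a ^ 3 := sq_sum_cube_le _ _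
  have hbn : 5 * b ≤ n * a ^ 2 := by
    refine abs_le_of_sq_le_sq' ?_ (by positivity) |>.2
    calc (5 * b) ^ 2 = 25 * b ^ 2 := by ring
      _ ≤ 25 * a ^ 3 := by linarith
      _ ≤ n * a ^ 3 * (n * a) := by
          have := mul_le_mul_of_nonneg_right hn' (pow_nonneg ha0.le 3)
          nlinarith [mul_le_mul_of_nonneg_left hna (by positivity : 0 ≤ (n : ℝ) * a ^ 3)]
      _ = (n * a ^ 2) ^ 2 := by ring
  have hE := expect_sq_relative_error (m := m) hq1 hp hm2 ha0
  rw [← ha, ← hb] at hE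
  set G := {y : Fin m → U | |collEst h y * (1 / a) - 1| ≤ 3 * ε}
  have hC : Pr q Gᶜ ≤ expect q fun x : Fin m → U =>
      1 / (9 * ε ^ 2) * (collEst h x * (1 / a) - 1) ^ 2 := by
    refine Pr_le_expect hq0 (fun x => by positivity) fun x hx => ?_
    have hx' : 3 * ε < |collEst h x * (1 / a) - 1| := not_le.1 hx
    have hsq := pow_le_pow_left₀ (by positivity) hx'.le 2
    rw [sq_abs] at hsq
    rw [one_div_mul_eq_div, one_le_div (by positivity)]
    linarith
  rw [expect_const_mul, hE] at hC
  have hfin : 1 / (9 * ε ^ 2) * ((2 * a + 4 * (m - 2) * b - (4 * m - 6) * a ^ 2)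
      / (m * (m - 1) * a ^ 2)) ≤ 1 / 10 := by
    have hm1 : (0 : ℝ) < m - 1 := by linarith
    rw [one_div_mul_eq_div, div_div, div_le_iff₀ (by positivity)]
    have h1 : 2 * a ≤ 2 * n * a ^ 2 := by nlinarith
    have h2 : 4 * (m - 2) * b ≤ 4 / 5 * (m - 2) * (n * a ^ 2) := by nlinarith
    have h3 : (2 + 4 / 5 * ((m : ℝ) - 2)) * (n * a ^ 2)
        ≤ 9 / 10 * (m - 1) * (n * a ^ 2) :=
      mul_le_mul_of_nonneg_right (by linarith) (by positivity)
    have h4 : 9 / 10 * (m - 1) * (n * a ^ 2) ≤ 9 / 10 * (m - 1) * (ε ^ 2 * m * a ^ 2) := by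
      gcongr
    have h5 : 0 ≤ (4 * (m : ℝ) - 6) * a ^ 2 := mul_nonneg (by linarith) (by positivity)
    linarith
  linarith [Pr_add_Pr_compl hq1 G]

end Chebyshev

/-- inequality (1) of the paper: For all `n > 24`, `0 < ε < 1/3`,
`δ > 0`, `s > 0`, and `m = ε⁻² n^(1+δ)`, the set
`C_s = { x : d_T(x, A) < s }` has probability at least `1 − (10/9) e^(−s²/4)`,
where `A` is the set of sequences whose empirical collision probability estimates
`‖p‖²` within relative error `3ε`. -/
theorem prob_Cs_ge
    {U : Type*} [Fintype U] [Nonempty U] [DecidableEq U]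
    (n : ℕ) (hn : 24 < n)
    (q : U → ℝ) (hq0 : ∀ u, 0 ≤ q u) (hq1 : ∑ u, q u = 1)
    (h : U → Fin n)
    (p : Fin n → ℝ)
    (hp : ∀ i, p i = ∑ u ∈ Finset.univ.filter (fun u => h u = i), q u)
    (m : ℕ) (hm : 2 ≤ m)
    (ε δ s : ℝ) (hε0 : 0 < ε) (hε : ε < 1 / 3) (hδ : 0 < δ) (hs : 0 < s)
    (hmn : (m : ℝ) = ε ^ (-2 : ℝ) * (n : ℝ) ^ (1 + δ)) :
    1 - (10 / 9) * Real.exp (-s ^ 2 / 4)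
      ≤ Pr q {x : Fin m → U |
          convexDist x
              {y : Fin m → U |
                |collEst h y * (1 / ∑ i : Fin n, p i ^ 2) - 1| ≤ 3 * ε}
            < s} := by
  have hn' : (1 : ℝ) ≤ n := by exact_mod_cast (by omega : 1 ≤ n)
  have hle : (n : ℝ) ≤ ε ^ 2 * m := by
    have hpow : (n : ℝ) ≤ (n : ℝ) ^ (1 + δ) := by
      simpa using Real.rpow_le_rpow_of_exponent_le hn' (by linarith : (1 : ℝ) ≤ 1 + δ)
    have hε2 : ε ^ (-2 : ℝ) = (ε ^ 2)⁻¹ := by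
      rw [Real.rpow_neg hε0.le, Real.rpow_two]
    rwa [hmn, hε2, mul_inv_cancel_left₀ (by positivity)]
  have hA := nine_tenths_le_Pr hq0 hq1 hp hn hε0 hε hle
  set A := {y : Fin m → U | |collEst h y * (1 / ∑ i : Fin n, p i ^ 2) - 1| ≤ 3 * ε}
  have hT := Pr_mul_Pr_le_convexDist hq0 hq1 A hs.le
  have hc : {x : Fin m → U | convexDist x A < s}ᶜ = {x | s ≤ convexDist x A} := by
    ext x
    simp
  have hsum := Pr_add_Pr_compl hq1 {x : Fin m → U | convexDist x A < s}
  rw [hc] at hsum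
  nlinarith [mul_le_mul_of_nonneg_right hA (Pr_nonneg hq0 {x | s ≤ convexDist x A})]
end
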